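/- arXiv:2105.05422 — 3 statements merged into one kernel-verified Lean document; each statement's English description precedes it below -/
import Mathlib

section
/- In the category of small categories and lenses, all idempotents split: if (f, φ) : A ⇌ A is a lens whose composite with itself equals itself as a lens, then there exist a small category E and lenses (r, ρ) : A ⇌ E and (s, σ) : E ⇌ A such that the composite of (r, ρ) followed by (s, σ) equals (f, φ) and the composite of (s, σ) followed by (r, ρ) equals the identity lens on E. -/
open CategoryTheory

universe u

/-- A functor `F` is a discrete opfibration if for every object `a` of its domain and
every morphism `u : F.obj a ⟶ b` of its codomain, there exists a unique morphism `w`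
with domain `a` such that `F.map w = u` (up to the identification of codomains). -/
def IsDiscreteOpfibration {A B : Type u} [SmallCategory A] [SmallCategory B]
    (F : A ⥤ B) : Prop :=
  ∀ ⦃a : A⦄ ⦃b : B⦄ (u : F.obj a ⟶ b),
    ∃! w : Σ a' : A, a ⟶ a', ∃ h : F.obj w.1 = b, F.map w.2 = u ≫ eqToHom h.symm

/-- A (delta) lens between small categories: a functor together with a lifting
operation satisfying the three lens axioms. `lift u` packages the codomain
`a'` of the chosen lift together with the lift `a ⟶ a'` itself. -/
structure Lens (A B : Type u) [SmallCategory A] [SmallCategory B] where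
  /-- the underlying (Get) functor -/
  func : A ⥤ B
  /-- the lifting (Put) operation -/
  lift : ∀ ⦃a : A⦄ ⦃b : B⦄, (func.obj a ⟶ b) → Σ a' : A, a ⟶ a'
  /-- the codomain of the lift lies over the codomain of the lifted morphism -/
  lift_cod : ∀ ⦃a : A⦄ ⦃b : B⦄ (u : func.obj a ⟶ b), func.obj (lift u).1 = b
  /-- axiom (1): `f (φ (a, u)) = u` -/
  lift_map : ∀ ⦃a : A⦄ ⦃b : B⦄ (u : func.obj a ⟶ b),
      func.map (lift u).2 = u ≫ eqToHom (lift_cod u).symm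
  /-- axiom (2): `φ (a, 1) = 1` -/
  lift_id : ∀ a : A, lift (𝟙 (func.obj a)) = ⟨a, 𝟙 a⟩
  /-- axiom (3): `φ (a, v ∘ u) = φ (a', v) ∘ φ (a, u)` -/
  lift_comp : ∀ ⦃a : A⦄ ⦃b c : B⦄ (u : func.obj a ⟶ b) (v : b ⟶ c),
      lift (u ≫ v) = ⟨(lift (eqToHom (lift_cod u) ≫ v)).1,
        (lift u).2 ≫ (lift (eqToHom (lift_cod u) ≫ v)).2⟩

namespace Lens

variable {A B C : Type u} [SmallCategory A] [SmallCategory B] [SmallCategory C]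

theorem lift_eqToHom (L : Lens A B) {a a' : A} (h : a' = a) {b : B}
    (u : L.func.obj a ⟶ b) (h' : L.func.obj a' = L.func.obj a) :
    L.lift (eqToHom h' ≫ u) = ⟨(L.lift u).1, eqToHom h ≫ (L.lift u).2⟩ := by
  subst h; simp

/-- The identity lens on a small category. -/
def id (A : Type u) [SmallCategory A] : Lens A A where
  func := Functor.id A
  lift _ b u := ⟨b, u⟩
  lift_cod _ _ _ := rfl
  lift_map := by intros; simp
  lift_id := by intros; rfl
  lift_comp := by intros; simp

/-- Composition of lenses: `(L.comp M).lift u = L.lift ((M.lift u).2)`. -/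
def comp (L : Lens A B) (M : Lens B C) : Lens A C where
  func := L.func ⋙ M.func
  lift _ _ u := L.lift (M.lift u).2
  lift_cod a c u := by
    show M.func.obj (L.func.obj _) = c
    rw [L.lift_cod]
    exact M.lift_cod u
  lift_map a c u := by
    show M.func.map (L.func.map _) = _
    rw [L.lift_map, Functor.map_comp, M.lift_map, eqToHom_map]
    simp
  lift_id a := by
    show L.lift (M.lift (𝟙 (M.func.obj (L.func.obj a)))).2 = _
    rw [M.lift_id]
    exact L.lift_id a
  lift_comp a c c' u v := by
    show L.lift (M.lift (u ≫ v)).2 = _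
    rw [M.lift_comp u v]
    show L.lift ((M.lift u).2 ≫ (M.lift (eqToHom (M.lift_cod u) ≫ v)).2) = _
    rw [L.lift_comp]
    have key : M.lift (eqToHom (show (L.func ⋙ M.func).obj (L.lift (M.lift u).2).1 = c by
          show M.func.obj (L.func.obj _) = c; rw [L.lift_cod]; exact M.lift_cod u) ≫ v)
        = ⟨(M.lift (eqToHom (M.lift_cod u) ≫ v)).1,
            eqToHom (L.lift_cod (M.lift u).2) ≫ (M.lift (eqToHom (M.lift_cod u) ≫ v)).2⟩ := by
      rw [show (eqToHom (show (L.func ⋙ M.func).obj (L.lift (M.lift u).2).1 = c by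
          show M.func.obj (L.func.obj _) = c; rw [L.lift_cod]; exact M.lift_cod u) ≫ v)
        = eqToHom (congrArg M.func.obj (L.lift_cod (M.lift u).2)) ≫ (eqToHom (M.lift_cod u) ≫ v) by
          rw [← Category.assoc, eqToHom_trans]]
      exact M.lift_eqToHom (L.lift_cod (M.lift u).2) _ _
    beta_reduce
    rw [key]

/-- A lens is a monomorphism in the category of small categories and lenses if it is
left-cancellable with respect to lens composition. -/
def IsMono (f : Lens A B) : Prop :=
  ∀ ⦃D : Type u⦄ [SmallCategory D], ∀ x y : Lens D A, x.comp f = y.comp f → x = y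

/-- A lens is an epimorphism in the category of small categories and lenses if it is
right-cancellable with respect to lens composition. -/
def IsEpi (f : Lens A B) : Prop :=
  ∀ ⦃C : Type u⦄ [SmallCategory C], ∀ x y : Lens B C, f.comp x = f.comp y → x = y

end Lens

/-!
The image of any lens is closed under outgoing morphisms, since a morphism `u : f a ⟶ b` lifts to
a morphism whose codomain lies over `b`. The inclusion of the full image is therefore a lens with
`u` as the only lift of `u`, and every lens factors through it. For an idempotent lens
the equation `φ (a, φ (f a, u)) = φ (a, u)` and injectivity of `φ (a, -)`, which is axiom (1), give
`φ (f a, u) = u`. So the composite of the two factors in the other order lifts like the identity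
lens, and by axiom (1) its functor then is the identity as well.
-/

namespace Lens

variable {A B : Type u} [SmallCategory A] [SmallCategory B]

theorem lift_congr {L M : Lens A B} (h : L = M) {a : A} {b : B} (u : L.func.obj a ⟶ b)
    (h' : M.func.obj a = L.func.obj a) : M.lift (eqToHom h' ≫ u) = L.lift u := by
  subst h
  simp

theorem ext_of_lift {L M : Lens A B} (hfunc : L.func = M.func)
    (hlift : ∀ (a : A) (b : B) (u : L.func.obj a ⟶ b),
      M.lift (eqToHom (Functor.congr_obj hfunc.symm a) ≫ u) = L.lift u) : L = M := by
  obtain ⟨F, l, _, _, _, _⟩ := L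
  obtain ⟨G, m, _, _, _, _⟩ := M
  obtain rfl : F = G := hfunc
  obtain rfl : l = m := by
    funext a b u
    simpa using (hlift a b u).symm
  rfl

theorem sigma_map_lift (L : Lens A B) {a : A} {b : B} (u : L.func.obj a ⟶ b) :
    (⟨_, L.func.map (L.lift u).2⟩ : Σ b : B, L.func.obj a ⟶ b) = ⟨b, u⟩ :=
  Sigma.ext (L.lift_cod u) (by simp [L.lift_map])

theorem lift_injective (L : Lens A B) (a : A) :
    Function.Injective fun u : Σ b : B, L.func.obj a ⟶ b => L.lift u.2 :=
  Function.LeftInverse.injective (g := fun w => ⟨_, L.func.map w.2⟩)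
    fun u => L.sigma_map_lift u.2

theorem eq_id_of_lift (L : Lens A A) (hobj : ∀ a, L.func.obj a = a)
    (hlift : ∀ (a b : A) (u : L.func.obj a ⟶ b),
      L.lift u = ⟨b, eqToHom (hobj a).symm ≫ u⟩) : L = Lens.id A := by
  have hmap (a b : A) (u : a ⟶ b) : L.func.map u ≍ u := by
    have h := L.sigma_map_lift (eqToHom (hobj a) ≫ u)
    rw [hlift, eqToHom_trans_assoc, eqToHom_refl, Category.id_comp] at h
    exact (Sigma.mk.inj h).2.trans (eqToHom_comp_heq u (hobj a))
  exact ext_of_lift (Functor.hext hobj hmap) fun a b u => (hlift a b u).symm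

/-- The corestriction of a lens to a full subcategory containing all values of its functor. -/
def corestrict (L : Lens A B) (P : ObjectProperty B) (hP : ∀ a, P (L.func.obj a)) :
    Lens A P.FullSubcategory where
  func := P.lift L.func hP
  lift _ _ u := L.lift u.hom
  lift_cod _ _ u := ObjectProperty.FullSubcategory.ext (L.lift_cod u.hom)
  lift_map _ _ u := by
    ext
    simpa [ObjectProperty.eqToHom_hom] using L.lift_map u.hom
  lift_id := L.lift_id
  lift_comp _ _ _ u v := by
    simp only [ObjectProperty.FullSubcategory.comp_hom]
    rw [ObjectProperty.eqToHom_hom]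
    exact L.lift_comp u.hom v.hom

/-- The inclusion, as a lens, of a cosieve: a full subcategory closed under outgoing morphisms.
Every morphism out of an object of the cosieve is its own lift. -/
def cosieveInclusion (P : ObjectProperty B) (hP : ∀ ⦃b c : B⦄, (b ⟶ c) → P b → P c) :
    Lens P.FullSubcategory B where
  func := P.ι
  lift b c u := ⟨⟨c, hP u b.property⟩, ObjectProperty.homMk u⟩
  lift_cod _ _ _ := rfl
  lift_map _ _ u := by simp
  lift_id _ := rfl
  lift_comp _ _ _ u v := by
    simp only [eqToHom_refl, Category.id_comp]
    rfl

theorem corestrict_comp_cosieveInclusion (L : Lens A B) (P : ObjectProperty B)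
    (hL : ∀ a, P (L.func.obj a)) (hP : ∀ ⦃b c : B⦄, (b ⟶ c) → P b → P c) :
    (L.corestrict P hL).comp (cosieveInclusion P hP) = L :=
  rfl

/-- The image of a lens on objects, taken up to equality rather than isomorphism. -/
def image (L : Lens A B) : ObjectProperty B :=
  ObjectProperty.ofObj L.func.obj

theorem image_obj (L : Lens A B) (a : A) : L.image (L.func.obj a) :=
  ObjectProperty.ofObj_apply _ a

theorem image_of_hom (L : Lens A B) ⦃b c : B⦄ (u : b ⟶ c) (hb : L.image b) : L.image c := by
  obtain ⟨a⟩ := hb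
  exact L.lift_cod u ▸ L.image_obj (L.lift u).1

theorem obj_eq_self_of_idem (f : Lens A A) (hf : f.comp f = f) {a : A} (ha : f.image a) :
    f.func.obj a = a := by
  obtain ⟨x⟩ := ha
  exact Functor.congr_obj (congrArg Lens.func hf) x

theorem lift_eq_self_of_idem (f : Lens A A) (hf : f.comp f = f) {a b : A}
    (ha : f.image a) (u : f.func.obj a ⟶ b) :
    f.lift u = ⟨b, eqToHom (f.obj_eq_self_of_idem hf ha).symm ≫ u⟩ := by
  obtain ⟨x⟩ := ha
  exact (f.lift_injective x (lift_congr hf u _)).symm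

theorem cosieveInclusion_comp_corestrict_of_idem (f : Lens A A) (hf : f.comp f = f) :
    (cosieveInclusion f.image f.image_of_hom).comp (f.corestrict f.image f.image_obj) =
      Lens.id f.image.FullSubcategory := by
  have hobj (a : f.image.FullSubcategory) :
      ((cosieveInclusion f.image f.image_of_hom).comp
        (f.corestrict f.image f.image_obj)).func.obj a = a :=
    ObjectProperty.FullSubcategory.ext (f.obj_eq_self_of_idem hf a.property)
  refine eq_id_of_lift _ hobj fun a b u => ?_
  have hlift := f.lift_eq_self_of_idem hf a.property u.hom
  refine (congrArg (fun w => (cosieveInclusion f.image f.image_of_hom).lift w.2) hlift).trans ?_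
  refine Sigma.ext rfl (heq_of_eq (ObjectProperty.hom_ext _ ?_))
  exact congrArg (· ≫ u.hom) (ObjectProperty.eqToHom_hom (hobj a).symm).symm

end Lens

/-- In the category of small categories and lenses, all idempotents split. -/
theorem lens_idempotents_split {A : Type u} [SmallCategory A]
    (f : Lens A A) (hf : f.comp f = f) :
    ∃ (E : Cat.{u, u}) (r : Lens A E) (s : Lens E A),
      r.comp s = f ∧ s.comp r = Lens.id E :=
  ⟨Cat.of f.image.FullSubcategory,
    f.corestrict f.image f.image_obj,
    Lens.cosieveInclusion f.image f.image_of_hom,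
    f.corestrict_comp_cosieveInclusion f.image f.image_obj f.image_of_hom,
    f.cosieveInclusion_comp_corestrict_of_idem hf⟩
end

section
/- If a lens (f, φ) : A ⇌ B has underlying functor f injective on objects and injective on morphisms (i.e. f is a monomorphism in the category Cat of small categories), then f is a discrete opfibration and the lens (f, φ) is a monomorphism in the category of small categories and lenses (left-cancellable with respect to lens composition). -/
open CategoryTheory

universe u

/-!
A discrete opfibration is a functor that is bijective on stars (the sets of morphisms out of each
object). The lifts of a lens are sections of its star maps, so a lens with injective star maps is a
discrete opfibration, and its lifts are then also retractions of the star maps. Hence lifting along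
a composite `x.comp f` determines every lift of `x`, and `f` is left-cancellable as soon as its
underlying functor is.
-/

section Functor

universe v₁ v₂ v₃ u₁ u₂ u₃

variable {A : Type u₁} [Category.{v₁} A] {B : Type u₂} [Category.{v₂} B]

theorem star_injective_of_faithful (F : A ⥤ B) [F.Faithful] (hobj : Function.Injective F.obj)
    (a : A) : Function.Injective (F.toPrefunctor.star a) :=
  hobj.sigma_map fun _ => F.map_injective

theorem functor_eq_of_comp_faithful_eq {D : Type u₃} [Category.{v₃} D] (F : A ⥤ B) [F.Faithful]
    (hobj : Function.Injective F.obj) {G H : D ⥤ A} (h : G ⋙ F = H ⋙ F) : G = H := by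
  have hGH : ∀ d, G.obj d = H.obj d := fun d => hobj (Functor.congr_obj h d)
  refine CategoryTheory.Functor.ext hGH fun d d' k => F.map_injective ?_
  simpa [eqToHom_map] using Functor.congr_hom h k

theorem star_mk_eq_mk_iff {a b b' : B} {u : a ⟶ b} {v : a ⟶ b'} :
    (⟨b, u⟩ : Quiver.Star a) = ⟨b', v⟩ ↔ ∃ h : b = b', u = v ≫ eqToHom h.symm := by
  constructor
  · rintro ⟨⟩
    exact ⟨rfl, by simp⟩
  · rintro ⟨rfl, rfl⟩
    simp

end Functor

theorem isDiscreteOpfibration_iff_star_bijective {A B : Type u} [SmallCategory A]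
    [SmallCategory B] {F : A ⥤ B} :
    IsDiscreteOpfibration F ↔ ∀ a, Function.Bijective (F.toPrefunctor.star a) := by
  simp only [IsDiscreteOpfibration, Function.bijective_iff_existsUnique, Sigma.forall,
    Prefunctor.star, star_mk_eq_mk_iff]
  rfl

theorem IsDiscreteOpfibration.faithful {A B : Type u} [SmallCategory A] [SmallCategory B]
    {F : A ⥤ B} (hF : IsDiscreteOpfibration F) : F.Faithful where
  map_injective {a _} :=
    ((isDiscreteOpfibration_iff_star_bijective.mp hF a).injective.of_sigma_map
      (f₂ := fun _ => F.map)) _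

namespace Lens

variable {A B D : Type u} [SmallCategory A] [SmallCategory B] [SmallCategory D]

theorem star_lift (f : Lens A B) {a : A} {b : B} (u : f.func.obj a ⟶ b) :
    f.func.toPrefunctor.star a (f.lift u) = ⟨b, u⟩ :=
  star_mk_eq_mk_iff.mpr ⟨f.lift_cod u, f.lift_map u⟩

theorem star_surjective (f : Lens A B) (a : A) :
    Function.Surjective (f.func.toPrefunctor.star a) :=
  fun u => ⟨f.lift u.2, f.star_lift u.2⟩

theorem isDiscreteOpfibration_of_star_injective (f : Lens A B)
    (hf : ∀ a, Function.Injective (f.func.toPrefunctor.star a)) :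
    IsDiscreteOpfibration f.func :=
  isDiscreteOpfibration_iff_star_bijective.mpr fun a => ⟨hf a, f.star_surjective a⟩

theorem lift_func_map (f : Lens A B) (hf : IsDiscreteOpfibration f.func) {a a' : A}
    (w : a ⟶ a') : f.lift (f.func.map w) = ⟨a', w⟩ :=
  (isDiscreteOpfibration_iff_star_bijective.mp hf a).injective (f.star_lift (f.func.map w))

theorem comp_lift_func_map (x : Lens D A) {f : Lens A B} (hf : IsDiscreteOpfibration f.func)
    {d : D} {a : A} (w : x.func.obj d ⟶ a) :
    (x.comp f).lift (a := d) (f.func.map w) = x.lift w :=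
  congrArg (fun s : Quiver.Star (x.func.obj d) => x.lift s.2) (f.lift_func_map hf w)

theorem eq_iff_lift_eq {x y : Lens A B} (hfunc : x.func = y.func) :
    x = y ↔ ∀ ⦃a : A⦄ ⦃b : B⦄ (u : x.func.obj a ⟶ b),
      x.lift u = y.lift (eqToHom (Functor.congr_obj hfunc a).symm ≫ u) := by
  obtain ⟨F, l, _, _, _, _⟩ := x
  obtain ⟨G, m, _, _, _, _⟩ := y
  obtain rfl : F = G := hfunc
  simp [funext_iff]

theorem eq_of_comp_eq_comp {x y : Lens D A} {f : Lens A B} (hf : IsDiscreteOpfibration f.func)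
    (hfunc : x.func = y.func) (h : x.comp f = y.comp f) : x = y := by
  refine (eq_iff_lift_eq hfunc).mpr fun d a w => ?_
  have hcomp : (x.comp f).func = (y.comp f).func := congrArg (· ⋙ f.func) hfunc
  have hobj : y.func.obj d = x.func.obj d := (Functor.congr_obj hfunc d).symm
  have hmap : f.func.map (eqToHom hobj ≫ w) =
      eqToHom (congrArg f.func.obj hobj) ≫ f.func.map w := by
    rw [Functor.map_comp, eqToHom_map]
  calc
    x.lift w = (x.comp f).lift (a := d) (f.func.map w) := (x.comp_lift_func_map hf w).symm
    _ = (y.comp f).lift (a := d) (eqToHom (congrArg f.func.obj hobj) ≫ f.func.map w) :=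
      (eq_iff_lift_eq hcomp).mp h _
    _ = (y.comp f).lift (a := d) (f.func.map (eqToHom hobj ≫ w)) :=
      congrArg (fun u => (y.comp f).lift (a := d) u) hmap.symm
    _ = y.lift (eqToHom hobj ≫ w) := y.comp_lift_func_map hf _

theorem isMono_of_isDiscreteOpfibration {f : Lens A B} (hf : IsDiscreteOpfibration f.func)
    (hobj : Function.Injective f.func.obj) : f.IsMono := by
  intro D _ x y h
  have := hf.faithful
  have hfunc : x.func = y.func :=
    functor_eq_of_comp_faithful_eq f.func hobj (congrArg Lens.func h)
  exact eq_of_comp_eq_comp hf hfunc h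

end Lens

/-- If the underlying functor of a lens is injective on objects and injective on
morphisms (i.e. a monomorphism in `Cat`), then it is a discrete opfibration and the
lens is a monomorphism in the category of small categories and lenses. -/
theorem lens_mono_of_cat_mono {A B : Type u} [SmallCategory A] [SmallCategory B]
    (f : Lens A B) (hobj : Function.Injective f.func.obj)
    (hmap : ∀ ⦃a a' : A⦄ (u v : a ⟶ a'), f.func.map u = f.func.map v → u = v) :
    IsDiscreteOpfibration f.func ∧ f.IsMono := by
  have : f.func.Faithful := ⟨fun {_ _ u v} h => hmap u v h⟩
  have hf : IsDiscreteOpfibration f.func :=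
    f.isDiscreteOpfibration_of_star_injective (star_injective_of_faithful f.func hobj)
  exact ⟨hf, Lens.isMono_of_isDiscreteOpfibration hf hobj⟩
end

section
/- Surjective-on-objects lenses are orthogonal to cosieve lenses in the category of small categories and lenses: given lenses (e, ε) : A ⇌ B with e surjective on objects, (m, μ) : C ⇌ D with m an injective-on-objects discrete opfibration, and lenses (f, φ) : A ⇌ C and (g, γ) : B ⇌ D such that the composite of (e, ε) followed by (g, γ) equals the composite of (f, φ) followed by (m, μ) as lenses, there exists a unique lens (h, θ) : B ⇌ C such that the composite of (e, ε) followed by (h, θ) equals (f, φ) and the composite of (h, θ) followed by (m, μ) equals (g, γ) as lenses. -/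
open CategoryTheory

universe u

/-! A cosieve lens `m` is monic, and a lens factors through `m` as soon as its functor does so on
objects. For a functor `F` and a discrete opfibration `P`, a lens structure on `F ⋙ P` restricts to
one on `F`: morphisms of the middle category are lifted through their images under `P`. A
commutative square whose left side is surjective on objects forces the required inclusion of object
images, and monicity of `m` gives both the upper triangle and uniqueness. -/

section Functor

variable {B C D : Type*} [Category* B] [Category* C] [Category* D]

theorem functor_eq_of_comp_eq {F G : B ⥤ C} {P : C ⥤ D} [P.Faithful]
    (hP : Function.Injective P.obj) (h : F ⋙ P = G ⋙ P) : F = G :=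
  CategoryTheory.Functor.ext (fun b => hP (Functor.congr_obj h b)) fun b b' u =>
    P.map_injective (by simpa [eqToHom_map] using Functor.congr_hom h u)

/-- The strict factorisation of a functor `G` through a fully faithful functor `P`. The values
on objects are part of the data, so that composing with `P` gives `G` on the nose and not only up to
isomorphism. -/
def strictLift {P : C ⥤ D} (hP : P.FullyFaithful) (G : B ⥤ D) (obj : B → C)
    (hobj : ∀ b, P.obj (obj b) = G.obj b) : B ⥤ C where
  obj := obj
  map u := hP.preimage (eqToHom (hobj _) ≫ G.map u ≫ eqToHom (hobj _).symm)
  map_id b := hP.map_injective (by simp)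
  map_comp u v := hP.map_injective (by simp)

theorem strictLift_comp {P : C ⥤ D} (hP : P.FullyFaithful) (G : B ⥤ D) (obj : B → C)
    (hobj : ∀ b, P.obj (obj b) = G.obj b) : strictLift hP G obj hobj ⋙ P = G :=
  CategoryTheory.Functor.ext hobj fun b b' u => by simp [strictLift]

end Functor

namespace IsDiscreteOpfibration

variable {A B : Type u} [SmallCategory A] [SmallCategory B] {F : A ⥤ B}

theorem eq_mk_of_map_eq (hF : IsDiscreteOpfibration F) {a a' : A} {w : Σ x : A, a ⟶ x} {v : a ⟶ a'}
    (hobj : F.obj w.1 = F.obj a') (hmap : F.map w.2 = F.map v ≫ eqToHom hobj.symm) :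
    w = ⟨a', v⟩ :=
  (hF (F.map v)).unique ⟨hobj, hmap⟩ ⟨rfl, by simp⟩

theorem faithful_s15 (hF : IsDiscreteOpfibration F) : F.Faithful where
  map_injective {a a'} v v' hv := by
    simpa using hF.eq_mk_of_map_eq (w := ⟨a', v⟩) (v := v') rfl (by simpa using hv)

theorem full (hF : IsDiscreteOpfibration F) (hobj : Function.Injective F.obj) : F.Full where
  map_surjective {a a'} u := by
    obtain ⟨⟨x, w⟩, ⟨hx, hw⟩, -⟩ := hF u
    obtain rfl : x = a' := hobj hx
    exact ⟨w, by simpa using hw⟩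

end IsDiscreteOpfibration

namespace Lens

variable {A B C D : Type u} [SmallCategory A] [SmallCategory B] [SmallCategory C]
  [SmallCategory D]

theorem eq_iff {L M : Lens A B} :
    L = M ↔ ∃ hfunc : L.func = M.func, ∀ ⦃a : A⦄ ⦃b : B⦄ (u : L.func.obj a ⟶ b),
      L.lift u = M.lift (eqToHom (Functor.congr_obj hfunc a).symm ≫ u) := by
  refine ⟨?_, fun ⟨hfunc, hlift⟩ => ?_⟩
  · rintro rfl
    exact ⟨rfl, by simp⟩
  · obtain ⟨F, l, _, _, _, _⟩ := L
    obtain ⟨G, k, _, _, _, _⟩ := M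
    obtain rfl : F = G := hfunc
    obtain rfl : @l = @k := by
      funext a b u
      simpa using hlift u
    rfl

theorem comp_eq_iff {L : Lens A B} {M : Lens B C} {N : Lens A C} :
    L.comp M = N ↔ ∃ hfunc : L.func ⋙ M.func = N.func,
      ∀ ⦃a : A⦄ ⦃c : C⦄ (u : M.func.obj (L.func.obj a) ⟶ c),
        L.lift (M.lift u).2 = N.lift (eqToHom (Functor.congr_obj hfunc a).symm ≫ u) :=
  eq_iff

theorem func_comp_func_of_comp_eq {L : Lens A B} {M : Lens B C} {N : Lens A C}
    (h : L.comp M = N) : L.func ⋙ M.func = N.func :=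
  congrArg func h

theorem comp_assoc (L : Lens A B) (M : Lens B C) (N : Lens C D) :
    (L.comp M).comp N = L.comp (M.comp N) := rfl

theorem lift_eqToHom_eq_id (L : Lens A B) {a : A} {b : B} (h : L.func.obj a = b) :
    L.lift (eqToHom h) = ⟨a, 𝟙 a⟩ := by
  subst h
  exact L.lift_id a

theorem lift_comp_eqToHom (L : Lens A B) {a : A} {b b' : B} (u : L.func.obj a ⟶ b)
    (h : b = b') : L.lift (u ≫ eqToHom h) = L.lift u := by
  subst h
  simp

theorem lift_map_of_isDiscreteOpfibration (m : Lens C D) (hm : IsDiscreteOpfibration m.func)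
    {c c' : C} (v : c ⟶ c') : m.lift (m.func.map v) = ⟨c', v⟩ :=
  hm.eq_mk_of_map_eq (m.lift_cod _) (m.lift_map _)

theorem lift_eqToHom_comp_map_lift (L : Lens B D) (m : Lens C D) {b : B} {c : C} {d : D}
    (h : L.func.obj b = m.func.obj c) (u : m.func.obj c ⟶ d) :
    L.lift (eqToHom h ≫ m.func.map (m.lift u).2) = L.lift (eqToHom h ≫ u) := by
  rw [m.lift_map, ← Category.assoc, L.lift_comp_eqToHom]

theorem lift_eq_of_comp_eq {L : Lens B C} {m : Lens C D} {g : Lens B D}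
    (hm : IsDiscreteOpfibration m.func) (h : L.comp m = g) {b : B} {c : C}
    (v : L.func.obj b ⟶ c) :
    L.lift v = g.lift
      (eqToHom (Functor.congr_obj (func_comp_func_of_comp_eq h) b).symm ≫ m.func.map v) := by
  obtain ⟨_, hlift⟩ := comp_eq_iff.mp h
  rw [← hlift, m.lift_map_of_isDiscreteOpfibration hm]

theorem eq_of_func_eq_of_comp_eq {L M : Lens B C} {m : Lens C D} {g : Lens B D}
    (hm : IsDiscreteOpfibration m.func) (hfunc : L.func = M.func) (hL : L.comp m = g)
    (hM : M.comp m = g) : L = M := by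
  refine eq_iff.mpr ⟨hfunc, fun b c v => ?_⟩
  rw [lift_eq_of_comp_eq hm hL, lift_eq_of_comp_eq hm hM, Functor.map_comp, eqToHom_map,
    eqToHom_trans_assoc]

theorem map_lift_of_func_eq_comp {P : C ⥤ D} (hP : IsDiscreteOpfibration P) (F : B ⥤ C)
    (g : Lens B D) (hg : g.func = F ⋙ P) {b : B} {c : C} (v : F.obj b ⟶ c) :
    (⟨F.obj (g.lift (eqToHom (Functor.congr_obj hg b) ≫ P.map v)).1,
      F.map (g.lift (eqToHom (Functor.congr_obj hg b) ≫ P.map v)).2⟩ : Σ x : C, F.obj b ⟶ x) =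
      ⟨c, v⟩ := by
  refine hP.eq_mk_of_map_eq ((Functor.congr_obj hg _).symm.trans (g.lift_cod _)) ?_
  have h := Functor.congr_hom hg.symm (g.lift (eqToHom (Functor.congr_obj hg b) ≫ P.map v)).2
  simpa [g.lift_map] using h

/-- The restriction to `F` of a lens structure on `F ⋙ P`, for `P` a discrete opfibration: a
morphism is lifted by lifting its image under `P`. The equation `g.func = F ⋙ P` is a hypothesis
rather than built into the type of `g`, whence the `eqToHom`. -/
def ofComp {P : C ⥤ D} (hP : IsDiscreteOpfibration P) (F : B ⥤ C) (g : Lens B D)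
    (hg : g.func = F ⋙ P) : Lens B C where
  func := F
  lift b _ v := g.lift (eqToHom (Functor.congr_obj hg b) ≫ P.map v)
  lift_cod b c v := congrArg Sigma.fst (map_lift_of_func_eq_comp hP F g hg v)
  lift_map b c v := by
    have hv := (Sigma.ext_iff.mp (map_lift_of_func_eq_comp hP F g hg v)).2
    exact eq_of_heq (hv.trans (comp_eqToHom_heq v _).symm)
  lift_id b := by
    simpa using g.lift_eqToHom_eq_id (Functor.congr_obj hg b)
  lift_comp b c c' u v := by
    rw [P.map_comp, ← Category.assoc, g.lift_comp, P.map_comp, eqToHom_map, eqToHom_trans_assoc]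

theorem ofComp_comp (m : Lens C D) (hm : IsDiscreteOpfibration m.func) (F : B ⥤ C) (g : Lens B D)
    (hg : g.func = F ⋙ m.func) : (ofComp hm F g hg).comp m = g :=
  comp_eq_iff.mpr ⟨hg.symm, fun _ _ u => g.lift_eqToHom_comp_map_lift m _ u⟩

/-- A cosieve lens is a lens whose functor is an injective-on-objects discrete opfibration, i.e. the
inclusion of a cosieve up to isomorphism; these are the right class of the orthogonality. -/
structure IsCosieve (m : Lens C D) : Prop where
  injective_obj : Function.Injective m.func.obj
  isDiscreteOpfibration : IsDiscreteOpfibration m.func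

namespace IsCosieve

variable {m : Lens C D}

theorem isMono (hm : m.IsCosieve) : m.IsMono := fun _ _ _ _ h =>
  have := hm.isDiscreteOpfibration.faithful_s15
  eq_of_func_eq_of_comp_eq hm.isDiscreteOpfibration
    (functor_eq_of_comp_eq hm.injective_obj (func_comp_func_of_comp_eq h)) h rfl

theorem existsUnique_comp_eq (hm : m.IsCosieve) (g : Lens B D)
    (hg : ∀ b, g.func.obj b ∈ Set.range m.func.obj) : ∃! h : Lens B C, h.comp m = g := by
  have := hm.isDiscreteOpfibration.faithful_s15
  have := hm.isDiscreteOpfibration.full hm.injective_obj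
  choose obj hobj using hg
  have hfunc := strictLift_comp (.ofFullyFaithful m.func) g.func obj hobj
  have hcomp := ofComp_comp m hm.isDiscreteOpfibration _ g hfunc.symm
  exact ⟨_, hcomp, fun h hh => hm.isMono _ _ (hh.trans hcomp.symm)⟩

end IsCosieve

end Lens

/-- Surjective-on-objects lenses are orthogonal to cosieve lenses (lenses whose
underlying functor is an injective-on-objects discrete opfibration) in the category of
small categories and lenses. -/
theorem lens_orthogonality {A B C D : Type u}
    [SmallCategory A] [SmallCategory B] [SmallCategory C] [SmallCategory D]
    (e : Lens A B) (he : Function.Surjective e.func.obj)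
    (m : Lens C D) (hm₁ : Function.Injective m.func.obj)
    (hm₂ : IsDiscreteOpfibration m.func)
    (f : Lens A C) (g : Lens B D) (hsq : e.comp g = f.comp m) :
    ∃! h : Lens B C, e.comp h = f ∧ h.comp m = g := by
  have hm : m.IsCosieve := ⟨hm₁, hm₂⟩
  have hrange : ∀ b, g.func.obj b ∈ Set.range m.func.obj := fun b => by
    obtain ⟨a, rfl⟩ := he b
    exact ⟨f.func.obj a, Functor.congr_obj (Lens.func_comp_func_of_comp_eq hsq.symm) a⟩
  obtain ⟨h, hcomp, hunique⟩ := hm.existsUnique_comp_eq g hrange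
  have hupper : e.comp h = f := hm.isMono _ _ <| by rw [Lens.comp_assoc, hcomp, hsq]
  exact ⟨h, ⟨hupper, hcomp⟩, fun h' hh' => hunique h' hh'.2⟩
end
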